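/- Let M be a Coxeter matrix on a countably infinite type S with M s t = 0 or M s t ≥ 4 for all s ≠ t (extra-large type, 0 encoding ∞), let A be the associated Artin group with generators a : S → A, and fix an injective enumeration s : ℕ → S. Then for every k ∈ ℕ, the normalized moment (2N)^{-k/2} · #{((i_1, ε_1), …, (i_k, ε_k)) ∈ ({0, …, N−1} × {+1, −1})^k : a_{s(i_1)}^{ε_1} · … · a_{s(i_k)}^{ε_k} = 1 in A} converges, as N → ∞, to 0 if k is odd and to the Catalan number C_n = (1/(n+1))·binom(2n, n) if k = 2n is even. -/

import Mathlib

open Filter Topology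

/-- The alternating word `s·t·s·t·⋯` with `m` factors (starting with `s`), as an element of the
free group on `S`. -/
def artinAltWord {S : Type*} (s t : S) (m : ℕ) : FreeGroup S :=
  (List.ofFn fun j : Fin m => FreeGroup.of (if (j : ℕ) % 2 = 0 then s else t)).prod

/-- The Artin relators associated to a Coxeter matrix `M` : for each pair `s ≠ t` with
`2 ≤ M s t` (finite), the relator `alt(s, t, M s t) · alt(t, s, M s t)⁻¹` expressing
`s·t·s·⋯ = t·s·t·⋯` (both sides with `M s t` factors). -/
def artinRelators {S : Type*} (M : CoxeterMatrix S) : Set (FreeGroup S) :=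
  {x | ∃ s t : S, s ≠ t ∧ 2 ≤ M s t ∧
    x = artinAltWord s t (M s t) * (artinAltWord t s (M s t))⁻¹}

/-- The Artin group associated to a Coxeter matrix `M`. -/
abbrev ArtinGroup {S : Type*} (M : CoxeterMatrix S) : Type _ :=
  PresentedGroup (artinRelators M)

/-- The generators of the Artin group associated to `M`. -/
def artinGen {S : Type*} (M : CoxeterMatrix S) (s : S) : ArtinGroup M :=
  PresentedGroup.of s


open Filter Topology

/-! ### The geometric representation -/
namespace ArtinCLT

section geom

variable {S : Type*} (M : CoxeterMatrix S)

open Classical in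
/-- Entries of the Cartan-type matrix. -/
noncomputable def cc (s t : S) : ℝ :=
  if s = t then 2 else if M s t = 0 then -2 else -2 * Real.cos (Real.pi / M s t)

/-- The coroot functional. -/
noncomputable def ff (s : S) : Module.Dual ℝ (S →₀ ℝ) := Finsupp.linearCombination ℝ (cc M s)

lemma ff_single (s t : S) : ff M s (Finsupp.single t 1) = cc M s t := by
  simp [ff]

lemma ff_self (s : S) : ff M s (Finsupp.single s 1) = 2 := by
  simp [ff_single, cc]

/-- The reflection. -/
noncomputable def rr (s : S) : (S →₀ ℝ) ≃ₗ[ℝ] (S →₀ ℝ) := Module.reflection (ff_self M s)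

lemma cc_symm (s t : S) : cc M s t = cc M t s := by
  unfold cc
  rw [M.symmetric s t]
  by_cases h : s = t
  · simp [h]
  · simp [h, Ne.symm h]

lemma rr_apply (s : S) (v : S →₀ ℝ) : rr M s v = v - (ff M s v) • Finsupp.single s 1 := by
  simp [rr, Module.reflection_apply]

lemma rr_mul_self (s : S) : rr M s * rr M s = 1 := by
  ext1 v
  exact Module.involutive_reflection (ff_self M s) v

lemma rr_pow {s t : S} (hst : s ≠ t) (h4 : 4 ≤ M s t) : (rr M s * rr M t) ^ (M s t) = 1 := by
  set m := M s t with hm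
  have hm0 : (0:ℝ) < m := by exact_mod_cast (by omega : 0 < m)
  set θ : ℝ := 2 * Real.pi / m with hθ
  have hc : cc M s t = -2 * Real.cos (Real.pi / m) := by
    have : M s t ≠ 0 := by omega
    simp [cc, hst, this, hm]
  have ht : 2 * Real.cos θ = ff M s (Finsupp.single t 1) * ff M t (Finsupp.single s 1) - 2 := by
    rw [ff_single, ff_single, cc_symm M t s, hc]
    have : θ = 2 * (Real.pi / m) := by rw [hθ]; ring
    rw [this, Real.cos_two_mul]; ring
  have hsin : Real.sin θ ≠ 0 := by
    apply ne_of_gt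
    apply Real.sin_pos_of_pos_of_lt_pi
    · positivity
    · rw [hθ, div_lt_iff₀ hm0]
      have : (4:ℝ) ≤ m := by exact_mod_cast h4
      nlinarith [Real.pi_pos]
  have hS : ∀ n : ℤ, (Polynomial.Chebyshev.S ℝ n).eval (2 * Real.cos θ)
      = Real.sin ((n+1) * θ) / Real.sin θ := by
    intro n
    rw [eq_div_iff hsin]
    exact Polynomial.Chebyshev.S_two_mul_real_cos θ n
  ext1 z
  unfold rr
  rw [Module.reflection_mul_reflection_pow_apply (ff_self M s) (ff_self M t) m z _ ht]
  rcases Nat.even_or_odd' m with ⟨k, hk | hk⟩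
  · have e1 : ((m:ℤ) - 2) / 2 = k - 1 := by omega
    have e2 : ((m:ℤ) - 1) / 2 = k - 1 := by omega
    have z1 : (Polynomial.Chebyshev.S ℝ ((k:ℤ) - 1)).eval (2 * Real.cos θ) = 0 := by
      rw [hS]
      have : (((k:ℤ)-1 : ℤ) + 1 : ℝ) * θ = Real.pi := by
        rw [hθ]; push_cast
        rw [hk] at hm0 ⊢; push_cast at hm0 ⊢
        have hk0 : (k:ℝ) ≠ 0 := by intro h; simp [h] at hm0
        field_simp
        ring
      rw [this]; simp
    rw [e1, e2, z1]; simp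
  · have e1 : ((m:ℤ) - 2) / 2 = k - 1 := by omega
    have e2 : ((m:ℤ) - 1) / 2 = k := by omega
    have e3 : ((m:ℤ) - 3) / 2 = k - 1 := by omega
    have e4 : ((m:ℤ)) / 2 = k := by omega
    have z1 : (Polynomial.Chebyshev.S ℝ (k:ℤ)).eval (2 * Real.cos θ) +
       (Polynomial.Chebyshev.S ℝ ((k:ℤ) - 1)).eval (2 * Real.cos θ) = 0 := by
      rw [hS, hS]
      have : (((k:ℤ) : ℤ) + 1 : ℝ) * θ = 2 * Real.pi - (((k:ℤ)-1 : ℤ) + 1 : ℝ) * θ := by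
        rw [hθ]; push_cast
        rw [hk] at hm0 ⊢; push_cast at hm0 ⊢
        field_simp
        ring
      rw [this, Real.sin_two_pi_sub]; ring
    rw [e1, e2, e3, e4, z1]; simp

variable (hM : ∀ s t : S, s ≠ t → M s t = 0 ∨ 4 ≤ M s t)

include hM in
lemma liftable : M.IsLiftable (rr M) := by
  intro s t
  by_cases h : s = t
  · subst h; simp [rr_mul_self]
  · rcases hM s t h with h0 | h4
    · simp [h0]
    · exact rr_pow M h h4

/-- The geometric representation of the Coxeter group. -/
noncomputable def geo : M.Group →* ((S →₀ ℝ) ≃ₗ[ℝ] (S →₀ ℝ)) :=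
  M.toCoxeterSystem.lift ⟨rr M, liftable M hM⟩

lemma geo_simple (s : S) : geo M hM (M.toCoxeterSystem.simple s) = rr M s :=
  M.toCoxeterSystem.lift_apply_simple (liftable M hM) s

lemma geo_coord (s : S) (l : List S) (hl : s ∉ l) (v : S →₀ ℝ) :
    (geo M hM (M.toCoxeterSystem.wordProd l) v) s = v s := by
  induction l with
  | nil => simp
  | cons t l ih =>
    simp only [List.mem_cons, not_or] at hl
    rw [CoxeterSystem.wordProd_cons, map_mul, geo_simple, LinearEquiv.mul_apply, rr_apply]
    simp [ih hl.2, Finsupp.single_apply, Ne.symm hl.1]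

include hM in
lemma simple_ne_wordProd (s : S) (l : List S) (hl : s ∉ l) :
    M.toCoxeterSystem.simple s ≠ M.toCoxeterSystem.wordProd l := by
  intro h
  have h1 := geo_coord M hM s l hl (Finsupp.single s 1)
  rw [← h, geo_simple, rr_apply, ff_self] at h1
  norm_num at h1

lemma cc_bound {s t : S} (hst : s ≠ t) (h : M s t = 0 ∨ 4 ≤ M s t) :
    cc M s t < 0 ∧ 2 ≤ cc M s t ^ 2 ∧ (M s t ≠ 4 → 2 < cc M s t ^ 2) := by
  rcases h with h | h
  · simp [cc, hst, h]; norm_num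
  · have h0 : M s t ≠ 0 := by omega
    have hc : cc M s t = -2 * Real.cos (Real.pi / M s t) := by simp [cc, hst, h0]
    have hm : (4:ℝ) ≤ M s t := by exact_mod_cast h
    have hle : Real.pi / M s t ≤ Real.pi / 4 := by
      have := Real.pi_pos
      gcongr
    have hpos : 0 < Real.pi / M s t := by have := Real.pi_pos; positivity
    have h4 := Real.cos_pi_div_four
    have h2 : Real.sqrt 2 ^ 2 = 2 := Real.sq_sqrt (by norm_num)
    have hs : 0 < Real.sqrt 2 := by positivity
    have hcos : Real.sqrt 2 / 2 ≤ Real.cos (Real.pi / M s t) := by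
      rw [← h4]
      apply Real.cos_le_cos_of_nonneg_of_le_pi hpos.le _ hle
      linarith [Real.pi_pos]
    refine ⟨?_, ?_, ?_⟩
    · rw [hc]; linarith
    · rw [hc]; nlinarith
    · intro hne
      have hm' : (4:ℝ) < M s t := by exact_mod_cast (lt_of_le_of_ne h (Ne.symm hne))
      have hlt : Real.pi / M s t < Real.pi / 4 := by
        have := Real.pi_pos
        gcongr
      have hcos : Real.sqrt 2 / 2 < Real.cos (Real.pi / M s t) := by
        rw [← h4]
        apply Real.cos_lt_cos_of_nonneg_of_le_pi hpos.le _ hlt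
        linarith [Real.pi_pos]
      rw [hc]; nlinarith

include hM in
lemma braid_ne {s t : S} (hst : s ≠ t) :
    let a := M.toCoxeterSystem.simple s
    let b := M.toCoxeterSystem.simple t
    a ≠ b ∧ a * b ≠ b * a ∧ a * b * a ≠ b * a * b ∧
      (M s t ≠ 4 → a * b * a * b ≠ b * a * b * a) := by
  intro a b
  obtain ⟨h1, h2, h3⟩ := cc_bound M hst (hM s t hst)
  set c := cc M s t with hc
  have ga : ∀ p q : ℝ, geo M hM a (p • Finsupp.single s 1 + q • Finsupp.single t 1)
      = (-p - c * q) • Finsupp.single s 1 + q • Finsupp.single t 1 := by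
    intro p q
    rw [geo_simple, rr_apply, map_add, map_smul, map_smul, ff_self, ff_single, ← hc]
    simp only [smul_eq_mul]
    module
  have gb : ∀ p q : ℝ, geo M hM b (p • Finsupp.single s 1 + q • Finsupp.single t 1)
      = p • Finsupp.single s 1 + (-q - c * p) • Finsupp.single t 1 := by
    intro p q
    rw [geo_simple, rr_apply, map_add, map_smul, map_smul, ff_self, ff_single, cc_symm, ← hc]
    simp only [smul_eq_mul]
    module
  have co : ∀ p q p' q' : ℝ, p • Finsupp.single s (1:ℝ) + q • Finsupp.single t 1
      = p' • Finsupp.single s 1 + q' • Finsupp.single t 1 → p = p' ∧ q = q' := by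
    intro p q p' q' h
    have h1 := DFunLike.congr_fun h s
    have h2 := DFunLike.congr_fun h t
    simp [hst, Ne.symm hst] at h1 h2
    exact ⟨h1, h2⟩
  have key : ∀ x y : M.Group, x = y → 
      geo M hM x ((1:ℝ) • Finsupp.single s 1 + (0:ℝ) • Finsupp.single t 1)
        = geo M hM y ((1:ℝ) • Finsupp.single s 1 + (0:ℝ) • Finsupp.single t 1) := by
    rintro x y rfl; rfl
  refine ⟨fun h => ?_, fun h => ?_, fun h => ?_, fun h4 h => ?_⟩
  all_goals
    have k := key _ _ h
    simp only [map_mul, LinearEquiv.mul_apply, ga, gb] at k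
    obtain ⟨k1, k2⟩ := co _ _ _ _ k
    ring_nf at k1 k2
  · linarith
  · nlinarith
  · nlinarith
  · have := h3 h4
    nlinarith
end geom
end ArtinCLT

open Filter Topology
namespace ArtinCLT

/-! ### Alternating products -/
section alt
variable {G : Type*} [Group G]

/-- Alternating product `a b a ⋯` with `m` factors. -/
def altP : G → G → ℕ → G
  | _, _, 0 => 1
  | a, b, m + 1 => a * altP b a m

lemma altP_mul_inv {a b : G} (ha : a * a = 1) (hb : b * b = 1) (m : ℕ) :
    altP a b m * (altP b a m)⁻¹ = (a * b) ^ m := by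
  induction m generalizing a b with
  | zero => simp [altP]
  | succ m ih =>
    have hb' : b⁻¹ = b := inv_eq_of_mul_eq_one_left hb
    rw [altP, altP, mul_inv_rev, hb', ← mul_assoc, mul_assoc a, ih hb ha, pow_succ (a * b),
      ← mul_assoc]
    congr 1
    clear ih
    induction m with
    | zero => simp
    | succ m ih => rw [pow_succ, ← mul_assoc, ih, pow_succ]; simp [mul_assoc]

lemma map_altP {H : Type*} [Group H] (f : G →* H) (a b : G) (m : ℕ) :
    f (altP a b m) = altP (f a) (f b) m := by
  induction m generalizing a b with
  | zero => simp [altP]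
  | succ m ih => simp [altP, ih]

/-- Alternating list. -/
def altL {S : Type*} : S → S → ℕ → List S
  | _, _, 0 => []
  | a, b, m + 1 => a :: altL b a m

lemma altL_prod {S : Type*} (f : S → G) (s t : S) (m : ℕ) :
    ((altL s t m).map f).prod = altP (f s) (f t) m := by
  induction m generalizing s t with
  | zero => simp [altL, altP]
  | succ m ih => simp [altL, altP, ih]

end alt

/-! ### The cocycle -/
section cocycle
variable {S W : Type*} [Group W] {M : CoxeterMatrix S} (cs : CoxeterSystem M W)
variable {R : Type*} [AddCommGroup R] (r : R)

lemma conj_eq_simple (i : S) (x : W) :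
    cs.simple i * x * cs.simple i = cs.simple i ↔ x = cs.simple i := by
  constructor
  · intro h
    have h1 : cs.simple i * x = 1 := mul_eq_right.mp h
    have h2 := congrArg (cs.simple i * ·) h1
    simpa using h2
  · intro h; rw [h]; simp

open Classical in
/-- The permutation attached to a generator. -/
noncomputable def PP (i : S) : Equiv.Perm (W × R) where
  toFun x := (cs.simple i * x.1 * cs.simple i, x.2 + if x.1 = cs.simple i then r else 0)
  invFun x := (cs.simple i * x.1 * cs.simple i, x.2 - if x.1 = cs.simple i then r else 0)
  left_inv x := by
    ext
    · simp [mul_assoc]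
    · simp only [conj_eq_simple]; simp
  right_inv x := by
    ext
    · simp [mul_assoc]
    · simp only [conj_eq_simple]; simp

lemma PP_mul_self (hr : r + r = 0) (i : S) : PP cs r i * PP cs r i = 1 := by
  ext x
  · simp [PP, mul_assoc]
  · simp only [PP, Equiv.Perm.coe_mul, Function.comp, Equiv.coe_fn_mk, Equiv.Perm.coe_one, id]
    by_cases h : x.1 = cs.simple i
    · simp [h, add_assoc, hr]
    · have : cs.simple i * x.1 * cs.simple i ≠ cs.simple i := by rwa [ne_eq, conj_eq_simple]
      simp [this, h]

open Classical in
lemma PP_prod_inv (l : List S) (x : W) (n : R) :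
    ((l.map (PP cs r)).prod)⁻¹ (x, n) =
      ((cs.wordProd l)⁻¹ * x * cs.wordProd l, n - ((cs.leftInvSeq l).count x) • r) := by
  induction l generalizing x n with
  | nil => simp
  | cons i l ih =>
    rw [List.map_cons, List.prod_cons, mul_inv_rev, Equiv.Perm.mul_apply]
    have : (PP cs r i)⁻¹ (x, n) = (cs.simple i * x * cs.simple i, n - if x = cs.simple i then r else 0) := rfl
    rw [this, ih, cs.wordProd_cons]
    ext
    · simp [mul_assoc]
    · have h2 : (cs.leftInvSeq l).count (cs.simple i * x * cs.simple i) =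
        ((cs.leftInvSeq l).map (MulAut.conj (cs.simple i))).count x := by
        rw [← List.count_map_of_injective _ (MulAut.conj (cs.simple i)) (MulEquiv.injective _)]
        simp [mul_assoc]
      simp only [CoxeterSystem.leftInvSeq, List.count_cons, h2, beq_iff_eq, add_smul]
      by_cases h : x = cs.simple i
      · simp [h]; abel
      · simp [h, Ne.symm h]

lemma lis_altL (s t : S) (m : ℕ) : cs.leftInvSeq (altL s t m) =
    (List.range m).map (fun k => (cs.simple s * cs.simple t) ^ k * cs.simple s) := by
  induction m generalizing s t with
  | zero => simp [altL]
  | succ m ih =>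
    rw [altL, CoxeterSystem.leftInvSeq, ih, List.range_succ_eq_map]
    simp only [List.map_cons, List.map_map, pow_zero, one_mul]
    congr 1
    apply List.map_congr_left
    intro k _
    simp only [Function.comp, MulAut.conj_apply, cs.inv_simple]
    rw [pow_succ]
    have : ∀ k : ℕ, cs.simple s * (cs.simple t * cs.simple s) ^ k =
      (cs.simple s * cs.simple t) ^ k * cs.simple s := by
      intro k
      induction k with
      | zero => simp
      | succ k ih => rw [pow_succ, ← mul_assoc, ih, pow_succ]; simp [mul_assoc]
    rw [← mul_assoc, this]
    simp [mul_assoc]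

lemma lis_altL_perm (s t : S) :
    (cs.leftInvSeq (altL s t (M s t))).Perm (cs.leftInvSeq (altL t s (M s t))) := by
  rw [lis_altL, lis_altL]
  set m := M s t with hm
  have hpow : (cs.simple s * cs.simple t) ^ m = 1 := cs.simple_mul_simple_pow s t
  have : (List.range m).map (fun k => (cs.simple s * cs.simple t) ^ k * cs.simple s) =
      ((List.range m).map (fun k => (cs.simple t * cs.simple s) ^ k * cs.simple t)).reverse := by
    apply List.ext_getElem (by simp)
    intro k hk hk'
    simp only [List.length_map, List.length_range] at hk
    simp only [List.getElem_map, List.getElem_range, List.getElem_reverse, List.length_map,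
      List.length_range]
    obtain ⟨j, hj⟩ : ∃ j, m = k + (j + 1) := ⟨m - 1 - k, by omega⟩
    have e : m - 1 - k = j := by omega
    rw [e]
    have h1 : (cs.simple t * cs.simple s) = (cs.simple s * cs.simple t)⁻¹ := by simp
    have h2 : (cs.simple t * cs.simple s) ^ j * cs.simple t
        = (cs.simple t * cs.simple s) ^ (j + 1) * cs.simple s := by
      rw [pow_succ]; simp [mul_assoc]
    rw [h2, h1, inv_pow]
    congr 1
    rw [eq_inv_iff_mul_eq_one, ← pow_add, ← hj, hpow]
  rw [this]
  exact List.reverse_perm _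

lemma PP_braid (s t : S) : altP (PP cs r s) (PP cs r t) (M s t) =
    altP (PP cs r t) (PP cs r s) (M s t) := by
  classical
  rw [← altL_prod, ← altL_prod, ← inv_inj]
  have h : cs.wordProd (altL s t (M s t)) = cs.wordProd (altL t s (M s t)) := by
    unfold CoxeterSystem.wordProd
    rw [altL_prod, altL_prod, ← mul_inv_eq_one, altP_mul_inv (by simp) (by simp)]
    simp
  apply Equiv.ext
  rintro ⟨x, n⟩
  rw [PP_prod_inv, PP_prod_inv, h, (lis_altL_perm cs s t).count_eq]

lemma PP_liftable (hr : r + r = 0) : M.IsLiftable (PP cs r) := by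
  intro s t
  rw [← altP_mul_inv (PP_mul_self cs r hr s) (PP_mul_self cs r hr t), PP_braid]
  simp

open Classical in
lemma count_parity {l l' : List S} (h : cs.wordProd l = cs.wordProd l') (x : W) :
    (((cs.leftInvSeq l).count x : ℕ) : ZMod 2) = ((cs.leftInvSeq l').count x : ℕ) := by
  have hr : (1 : ZMod 2) + 1 = 0 := by decide
  have key : ∀ l : List S, cs.lift ⟨_, PP_liftable cs (1 : ZMod 2) hr⟩ (cs.wordProd l) =
      (l.map (PP cs (1 : ZMod 2))).prod := by
    intro l
    induction l with
    | nil => simp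
    | cons i l ih => rw [cs.wordProd_cons, map_mul, ih, cs.lift_apply_simple]; simp
  have h1 := PP_prod_inv cs (1 : ZMod 2) l x 0
  have h2 := PP_prod_inv cs (1 : ZMod 2) l' x 0
  rw [← key, ← h, key, h1] at h2
  have := congrArg Prod.snd h2
  simpa using this

/-- Exchange condition. -/
lemma exchange {l : List S} (hl : cs.IsReduced l) {i : S}
    (hi : cs.length (cs.simple i * cs.wordProd l) < l.length) :
    ∃ j < l.length, cs.wordProd l = cs.simple i * cs.wordProd (l.eraseIdx j) := by
  classical
  obtain ⟨τ, hτ, hτ'⟩ := cs.exists_isReduced (cs.simple i * cs.wordProd l)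
  have hprod : cs.wordProd (i :: τ) = cs.wordProd l := by
    rw [cs.wordProd_cons, ← hτ']; simp
  have hlen : cs.length (cs.wordProd l) = l.length := hl
  have hlτ : τ.length < l.length := by
    have : cs.length (cs.wordProd τ) = τ.length := hτ
    rw [← this, ← hτ']; exact hi
  have hred : cs.IsReduced (i :: τ) := by
    have := cs.length_wordProd_le (i :: τ)
    rw [hprod, hlen] at this
    unfold CoxeterSystem.IsReduced
    rw [hprod, hlen]
    simp at this ⊢; omega
  have hnd := CoxeterSystem.IsReduced.nodup_leftInvSeq cs hred
  have hc : (cs.leftInvSeq (i :: τ)).count (cs.simple i) = 1 :=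
    List.count_eq_one_of_mem hnd (by simp [CoxeterSystem.leftInvSeq])
  have hp := count_parity cs hprod (cs.simple i)
  rw [hc] at hp
  have hmem : cs.simple i ∈ cs.leftInvSeq l := by
    by_contra hn
    rw [List.count_eq_zero_of_not_mem hn] at hp
    revert hp; decide
  obtain ⟨j, hj, hj'⟩ := List.mem_iff_getElem.mp hmem
  refine ⟨j, by simpa using hj, ?_⟩
  have := cs.getD_leftInvSeq_mul_wordProd l j
  rw [List.getD_eq_getElem _ _ hj, hj'] at this
  rw [← this]; simp

end cocycle
end ArtinCLT

open Filter Topology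
namespace ArtinCLT

section tits
variable {S W : Type*} [DecidableEq S] [Group W] {M : CoxeterMatrix S} (cs : CoxeterSystem M W)

/-- Same letters, and letters occurring once are at the same place. -/
def RR (u v : List S) : Prop := u.Perm v ∧ ∀ x, u.count x = 1 → u.idxOf x = v.idxOf x

omit cs in
lemma RR.refl (u : List S) : RR u u := ⟨List.Perm.refl _, fun _ _ => rfl⟩

lemma RR.symm {u v : List S} (h : RR u v) : RR v u :=
  ⟨h.1.symm, fun x hx => (h.2 x (by rw [h.1.count_eq, hx])).symm⟩

lemma RR.trans {u v w : List S} (h : RR u v) (h' : RR v w) : RR u w :=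
  ⟨h.1.trans h'.1, fun x hx => (h.2 x hx).trans (h'.2 x (by rw [← h.1.count_eq, hx]))⟩

lemma RR.cons {u v : List S} (h : RR u v) (a : S) : RR (a :: u) (a :: v) := by
  refine ⟨h.1.cons a, fun x hx => ?_⟩
  by_cases hxa : a = x
  · simp [hxa]
  · rw [List.count_cons_of_ne hxa] at hx
    rw [List.idxOf_cons_ne _ hxa, List.idxOf_cons_ne _ hxa, h.2 x hx]

lemma RR.braid (s t : S) (u : List S) :
    RR (s :: t :: s :: t :: u) (t :: s :: t :: s :: u) := by
  constructor
  · rw [List.perm_iff_count]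
    intro a
    simp only [List.count_cons]
    omega
  · intro x hx
    by_cases h1 : s = x
    · simp [List.count_cons, h1] at hx
    by_cases h2 : t = x
    · simp [List.count_cons, h2] at hx; omega
    simp [List.idxOf_cons_ne, h1, h2]

lemma exch_split {α β : List S} (h : cs.IsReduced (α ++ β)) {i : S}
    (hi : cs.length (cs.simple i * cs.wordProd (α ++ β)) < (α ++ β).length) :
    (∃ j < α.length, cs.wordProd α = cs.simple i * cs.wordProd (α.eraseIdx j)) ∨
    ∃ β' : List S, β'.length + 1 = β.length ∧
      cs.wordProd (α ++ β) = cs.simple i * cs.wordProd (α ++ β') := by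
  obtain ⟨j, hj, hj'⟩ := exchange cs h hi
  by_cases hja : j < α.length
  · left
    refine ⟨j, hja, ?_⟩
    rw [List.eraseIdx_append_of_lt_length hja, cs.wordProd_append, cs.wordProd_append,
      ← mul_assoc] at hj'
    exact mul_right_cancel hj'
  · right
    refine ⟨β.eraseIdx (j - α.length), ?_, ?_⟩
    · rw [List.length_append] at hj
      apply List.length_eraseIdx_add_one; omega
    · rw [List.eraseIdx_append_of_length_le (by omega)] at hj'
      exact hj'

lemma isReduced_of_eq {u v : List S} (h : cs.IsReduced u) (hl : u.length = v.length)
    (hp : cs.wordProd u = cs.wordProd v) : cs.IsReduced v := by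
  unfold CoxeterSystem.IsReduced at *
  rw [← hp, h, hl]

lemma isReduced_tail {a : S} {u : List S} (h : cs.IsReduced (a :: u)) : cs.IsReduced u :=
  h.drop 1

/-- the braid non-degeneracy -/
def HB : Prop := ∀ s t : S, s ≠ t →
    cs.simple s ≠ cs.simple t ∧ cs.simple s * cs.simple t ≠ cs.simple t * cs.simple s ∧
    cs.simple s * cs.simple t * cs.simple s ≠ cs.simple t * cs.simple s * cs.simple t ∧
      (M s t ≠ 4 → cs.simple s * cs.simple t * cs.simple s * cs.simple t ≠
        cs.simple t * cs.simple s * cs.simple t * cs.simple s)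

omit [DecidableEq S] in
lemma descent_lt {u : List S} {i : S} {v : List S} (hv : v.length < u.length)
    (h : cs.wordProd u = cs.simple i * cs.wordProd v) :
    cs.length (cs.simple i * cs.wordProd u) < u.length := by
  rw [h]
  have := cs.length_wordProd_le v
  simp; omega

lemma step1 (hb : HB cs) {s t : S} (hst : s ≠ t) {u : List S} (hr : cs.IsReduced ([s] ++ u))
    (hd : cs.length (cs.simple t * cs.wordProd ([s] ++ u)) < ([s] ++ u).length) :
    ∃ u', u'.length + 1 = u.length ∧
      cs.wordProd ([s] ++ u) = cs.wordProd ([t, s] ++ u') := by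
  rcases exch_split cs hr hd with ⟨j, hj, h⟩ | ⟨β', h1, h2⟩
  · exfalso
    obtain ⟨h1, h2, h3, -⟩ := hb s t hst
    have : j = 0 := by simpa using hj
    subst this
    simp at h
    exact h1 h
  · exact ⟨β', h1, by rw [h2]; simp [cs.wordProd_cons]⟩

lemma step2 (hb : HB cs) {s t : S} (hst : s ≠ t) {u : List S} (hr : cs.IsReduced ([t, s] ++ u))
    (hd : cs.length (cs.simple s * cs.wordProd ([t, s] ++ u)) < ([t, s] ++ u).length) :
    ∃ u', u'.length + 1 = u.length ∧
      cs.wordProd ([t, s] ++ u) = cs.wordProd ([s, t, s] ++ u') := by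
  rcases exch_split cs hr hd with ⟨j, hj, h⟩ | ⟨β', h1, h2⟩
  · exfalso
    obtain ⟨h1, h2, h3, -⟩ := hb s t hst
    have : j = 0 ∨ j = 1 := by simp at hj; omega
    rcases this with rfl | rfl
    · simp [cs.wordProd_cons] at h
      apply h1
      calc cs.simple s = cs.simple t * (cs.simple t * cs.simple s) := by simp
        _ = cs.simple t := by simp [h]
    · simp [cs.wordProd_cons] at h
      exact h2 h.symm
  · exact ⟨β', h1, by rw [h2]; simp [cs.wordProd_cons]⟩

lemma step3 (hb : HB cs) {s t : S} (hst : s ≠ t) {u : List S} (hr : cs.IsReduced ([s, t, s] ++ u))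
    (hd : cs.length (cs.simple t * cs.wordProd ([s, t, s] ++ u)) < ([s, t, s] ++ u).length) :
    ∃ u', u'.length + 1 = u.length ∧
      cs.wordProd ([s, t, s] ++ u) = cs.wordProd ([t, s, t, s] ++ u') := by
  rcases exch_split cs hr hd with ⟨j, hj, h⟩ | ⟨β', h1, h2⟩
  · exfalso
    obtain ⟨h1, h2, h3, -⟩ := hb s t hst
    have : j = 0 ∨ j = 1 ∨ j = 2 := by simp at hj; omega
    rcases this with rfl | rfl | rfl
    · simp [cs.wordProd_cons] at h
      apply h1
      calc cs.simple s = cs.simple s * (cs.simple t * cs.simple s) * cs.simple s * cs.simple t := by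
            simp [mul_assoc]
        _ = cs.simple t := by simp [h]
    · simp [cs.wordProd_cons] at h
      apply h2
      calc cs.simple s * cs.simple t
          = cs.simple s * (cs.simple t * cs.simple s) * cs.simple s := by simp [mul_assoc]
        _ = cs.simple t * cs.simple s := by rw [h]
    · simp [cs.wordProd_cons] at h
      apply h3; simpa [mul_assoc] using h
  · exact ⟨β', h1, by rw [h2]; simp [cs.wordProd_cons]⟩

lemma step4 (hb : HB cs) {s t : S} (hst : s ≠ t) (h4 : M s t ≠ 4) {u : List S}
    (hr : cs.IsReduced ([t, s, t, s] ++ u))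
    (hd : cs.length (cs.simple s * cs.wordProd ([t, s, t, s] ++ u)) < ([t, s, t, s] ++ u).length) :
    ∃ u', u'.length + 1 = u.length ∧
      cs.wordProd ([t, s, t, s] ++ u) = cs.wordProd ([s, t, s, t, s] ++ u') := by
  rcases exch_split cs hr hd with ⟨j, hj, h⟩ | ⟨β', h1, h2⟩
  · exfalso
    obtain ⟨h1, h2, h3, h5⟩ := hb s t hst
    have : j = 0 ∨ j = 1 ∨ j = 2 ∨ j = 3 := by simp at hj; omega
    rcases this with rfl | rfl | rfl | rfl
    · simp [cs.wordProd_cons] at h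
      apply h1
      have h' := congrArg (cs.simple t * ·) h
      simpa using h'
    · simp [cs.wordProd_cons] at h
      apply h2
      have h' := congrArg (fun x => x * cs.simple s * cs.simple t) h
      simp [mul_assoc] at h'
      simp [h']
    · simp [cs.wordProd_cons] at h
      apply h3
      have h' := congrArg (fun x => x * cs.simple s) h
      simp [mul_assoc] at h'
      simp [mul_assoc, h']
    · simp [cs.wordProd_cons] at h
      apply h5 h4; simpa [mul_assoc] using h.symm
  · exact ⟨β', h1, by rw [h2]; simp [cs.wordProd_cons]⟩

theorem tits (hb : HB cs) (n : ℕ) : ∀ u v : List S, u.length = n → cs.IsReduced u →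
    cs.IsReduced v → (∀ x, u.count x ≤ 2) → cs.wordProd u = cs.wordProd v → RR u v := by
  induction n with
  | zero =>
    intro u v hu hru hrv hc he
    have : v.length = u.length := by
      rw [← hru.eq, ← hrv.eq, he]
    rw [hu] at this
    rw [List.length_eq_zero_iff] at hu this
    subst hu; subst this
    exact RR.refl _
  | succ n ih =>
    intro u v hu hru hrv hc he
    have hlen : v.length = u.length := by
      rw [← hru.eq, ← hrv.eq, he]
    match u, v, hu, hlen with
    | s :: u, t :: v, hu, hlen =>
    simp only [List.length_cons] at hu hlen
    have hcu : ∀ x, u.count x ≤ 2 := fun x =>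
      ((List.sublist_cons_self s u).count_le x).trans (hc x)
    by_cases hst : s = t
    · subst hst
      rw [cs.wordProd_cons, cs.wordProd_cons] at he
      exact (ih u v (by omega) (isReduced_tail cs hru) (isReduced_tail cs hrv) hcu
        (mul_left_cancel he)).cons s
    · have he0 := he
      rw [cs.wordProd_cons t] at he
      obtain ⟨u2, l2, e2⟩ := step1 cs hb hst hru (descent_lt cs (v := v) (by simp; omega) he)
      have r2 := isReduced_of_eq cs hru (by simp; omega) e2
      have es : cs.wordProd ([t, s] ++ u2) = cs.simple s * cs.wordProd u := by
        rw [← e2]; simp [cs.wordProd_cons]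
      obtain ⟨u3, l3, e3⟩ := step2 cs hb hst r2 (descent_lt cs (by simp; omega) es)
      have r3 := isReduced_of_eq cs r2 (by simp; omega) e3
      have et : cs.wordProd ([s, t, s] ++ u3) = cs.simple t * cs.wordProd v := by
        rw [← e3, ← e2, ← he]; rfl
      obtain ⟨u4, l4, e4⟩ := step3 cs hb hst r3 (descent_lt cs (by simp; omega) et)
      have r4 := isReduced_of_eq cs r3 (by simp; omega) e4
      by_cases h4 : M s t = 4
      · have hbr : cs.wordProd ([t, s, t, s] ++ u4) = cs.wordProd ([s, t, s, t] ++ u4) := by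
          have h1 := cs.simple_mul_simple_pow s t
          rw [h4] at h1
          have h2 := altP_mul_inv (cs.simple_mul_simple_self s) (cs.simple_mul_simple_self t) 4
          rw [h1, mul_inv_eq_one] at h2
          rw [cs.wordProd_append, cs.wordProd_append]
          congr 1
          simp [altP] at h2
          simp [cs.wordProd_cons, h2]
        have r4' := isReduced_of_eq cs r4 (by simp) hbr
        have a1 : RR u ([t, s, t] ++ u4) := by
          refine ih _ _ (by omega) (isReduced_tail cs hru) (isReduced_tail cs r4') hcu ?_
          have : cs.simple s * cs.wordProd u = cs.simple s * cs.wordProd ([t, s, t] ++ u4) := by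
            rw [← es, e3, e4, hbr]; simp [cs.wordProd_cons]
          exact mul_left_cancel this
        have a2 : RR (s :: u) (s :: t :: s :: t :: u4) := a1.cons s
        have a3 := a2.trans (RR.braid s t u4)
        have a4 : RR ([s, t, s] ++ u4) v := by
          refine ih _ _ (by simp; omega) (isReduced_tail cs r4) (isReduced_tail cs hrv) ?_ ?_
          · intro x
            refine le_trans ?_ (hc x)
            rw [a3.1.count_eq]
            exact (List.sublist_cons_self t _).count_le x
          · have : cs.simple t * cs.wordProd ([s, t, s] ++ u4) = cs.simple t * cs.wordProd v := by
              rw [← et, e4]; simp [cs.wordProd_cons]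
            exact mul_left_cancel this
        exact a3.trans (a4.cons t)
      · exfalso
        have es' : cs.wordProd ([t, s, t, s] ++ u4) = cs.simple s * cs.wordProd u := by
          rw [← e4, ← e3, es]
        obtain ⟨u5, l5, e5⟩ := step4 cs hb hst h4 r4 (descent_lt cs (by simp; omega) es')
        have r5 := isReduced_of_eq cs r4 (by simp; omega) e5
        have a1 : RR u ([t, s, t, s] ++ u5) := by
          refine ih _ _ (by omega) (isReduced_tail cs hru) (isReduced_tail cs r5) hcu ?_
          have : cs.simple s * cs.wordProd u = cs.simple s * cs.wordProd ([t, s, t, s] ++ u5) := by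
            rw [← es', e5]; simp [cs.wordProd_cons]
          exact mul_left_cancel this
        have := hc s
        rw [List.count_cons_self, a1.1.count_eq] at this
        simp [List.count_cons] at this
        omega

/-- A nonempty trivial word with all letters at most twice has two equal adjacent letters. -/
theorem adjacent (hb : HB cs) (w : List S) (hw : w ≠ []) (hc : ∀ x, w.count x ≤ 2)
    (h1 : cs.wordProd w = 1) : ∃ p x q, w = p ++ x :: x :: q := by
  -- find a suffix `t :: p` nonreduced with `p` reduced
  have hsuf : ∀ w : List S, ¬ cs.IsReduced w → ∃ q t p, w = q ++ t :: p ∧ cs.IsReduced p ∧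
      ¬ cs.IsReduced (t :: p) := by
    intro w
    induction w with
    | nil => intro h; exact absurd (by simp [CoxeterSystem.IsReduced]) h
    | cons a w ih =>
      intro h
      by_cases hr : cs.IsReduced w
      · exact ⟨[], a, w, rfl, hr, h⟩
      · obtain ⟨q, t, p, e, h2, h3⟩ := ih hr
        exact ⟨a :: q, t, p, by rw [e]; rfl, h2, h3⟩
  have hnr : ¬ cs.IsReduced w := by
    intro h
    have := h.eq
    rw [h1, cs.length_one] at this
    exact hw (List.length_eq_zero_iff.mp this.symm)
  obtain ⟨q, t, p, rfl, hp, htp⟩ := hsuf w hnr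
  have hlt : cs.length (cs.simple t * cs.wordProd p) < p.length := by
    have := cs.length_simple_mul (cs.wordProd p) t
    rw [hp.eq] at this
    rcases this with h | h
    · exact absurd (by rw [CoxeterSystem.IsReduced, cs.wordProd_cons, h]; rfl) htp
    · omega
  obtain ⟨j, hj, hj'⟩ := exchange cs hp hlt
  obtain ⟨a, r, b, rfl, rfl⟩ : ∃ a r b, p = a ++ r :: b ∧ j = a.length :=
    ⟨p.take j, p[j], p.drop (j + 1), by simp, by simp; omega⟩
  have hea : (a ++ r :: b).eraseIdx a.length = a ++ b := by
    rw [List.eraseIdx_append_of_length_le (by omega)]; simp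
  rw [hea] at hj'
  have e1 : cs.wordProd (a ++ [r]) = cs.wordProd (t :: a) := by
    have : cs.wordProd (a ++ [r]) * cs.wordProd b = cs.wordProd (t :: a) * cs.wordProd b := by
      rw [← cs.wordProd_append, ← cs.wordProd_append]
      simpa [cs.wordProd_cons] using hj'
    exact mul_right_cancel this
  have rr1 : cs.IsReduced (a ++ [r]) := by
    have := hp.take (a.length + 1)
    simpa [List.take_append, List.take_of_length_le] using this
  have rr2 := isReduced_of_eq cs rr1 (by simp) e1
  have hcc : ∀ x, (t :: (a ++ [r])).count x ≤ 2 := by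
    intro x
    refine le_trans (List.Sublist.count_le x ?_) (hc x)
    have : q ++ t :: (a ++ r :: b) = q ++ (t :: (a ++ [r])) ++ b := by simp
    rw [this]
    exact (List.sublist_append_right q _).trans (List.sublist_append_left _ b)
  have hR := tits cs hb _ _ _ rfl rr1 rr2 (fun x =>
    ((List.sublist_cons_self t _).count_le x).trans (hcc x)) e1
  have hrt : t = r := by
    have h := hR.1.count_eq r
    by_contra hne
    rw [List.count_append, List.count_cons_of_ne hne] at h
    simp at h
  subst hrt
  have hta : a.count t = 0 := by
    have := hcc t
    simp [List.count_append] at this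
    simpa using this
  have hi := hR.2 t (by simp [List.count_append, hta])
  rw [List.idxOf_append_of_notMem (List.count_eq_zero.mp hta)] at hi
  simp at hi
  subst hi
  exact ⟨q, t, b, by simp⟩

end tits
end ArtinCLT

open Filter Topology
namespace ArtinCLT

section artin
variable {S : Type*} (M : CoxeterMatrix S)

lemma lift_artinAltWord {G : Type*} [Group G] (f : S → G) (s t : S) (m : ℕ) :
    FreeGroup.lift f (artinAltWord s t m) = altP (f s) (f t) m := by
  induction m generalizing s t with
  | zero => simp [artinAltWord, altP]
  | succ m ih =>
    rw [altP, ← ih]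
    unfold artinAltWord
    rw [List.ofFn_succ, List.prod_cons, map_mul]
    congr 1
    · simp
    · congr 3
      funext j
      congr 1
      simp only [Fin.val_succ]
      rcases Nat.mod_two_eq_zero_or_one (j : ℕ) with h | h
      · have : ((j : ℕ) + 1) % 2 = 1 := by omega
        simp [h, this]
      · have : ((j : ℕ) + 1) % 2 = 0 := by omega
        simp [h, this]

lemma exists_lift {G : Type*} [Group G] (f : S → G)
    (hf : ∀ s t, altP (f s) (f t) (M s t) = altP (f t) (f s) (M s t)) :
    ∃ φ : ArtinGroup M →* G, ∀ s, φ (artinGen M s) = f s := by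
  have h : ∀ r ∈ artinRelators M, FreeGroup.lift f r = 1 := by
    rintro r ⟨s, t, -, -, rfl⟩
    rw [map_mul, map_inv, lift_artinAltWord, lift_artinAltWord, hf s t, mul_inv_cancel]
  exact ⟨PresentedGroup.toGroup h, fun s => PresentedGroup.toGroup.of h⟩

/-- Value of a signed word. -/
def lv {G : Type*} [Group G] (f : S → G) (w : List (S × Bool)) : G :=
  (w.map (fun x => if x.2 then f x.1 else (f x.1)⁻¹)).prod

lemma lv_append {G : Type*} [Group G] (f : S → G) (u v : List (S × Bool)) :
    lv f (u ++ v) = lv f u * lv f v := by simp [lv]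

lemma lv_cons {G : Type*} [Group G] (f : S → G) (x : S × Bool) (v : List (S × Bool)) :
    lv f (x :: v) = (if x.2 then f x.1 else (f x.1)⁻¹) * lv f v := by simp [lv]

lemma map_lv {G H : Type*} [Group G] [Group H] (φ : G →* H) (f : S → G) (w : List (S × Bool)) :
    φ (lv f w) = lv (fun s => φ (f s)) w := by
  induction w with
  | nil => simp [lv]
  | cons x w ih => rw [lv_cons, lv_cons, map_mul, ih]; split_ifs <;> simp

lemma lv_simple {W : Type*} [Group W] (cs : CoxeterSystem M W) (w : List (S × Bool)) :
    lv cs.simple w = cs.wordProd (w.map Prod.fst) := by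
  induction w with
  | nil => simp [lv]
  | cons x w ih => rw [lv_cons, ih, List.map_cons, cs.wordProd_cons]; simp

lemma wordProd_of_lv {w : List (S × Bool)} (h : lv (artinGen M) w = 1) :
    M.toCoxeterSystem.wordProd (w.map Prod.fst) = 1 := by
  obtain ⟨φ, hφ⟩ := exists_lift M M.toCoxeterSystem.simple (by
    intro s t
    rw [← mul_inv_eq_one, altP_mul_inv (M.toCoxeterSystem.simple_mul_simple_self s)
      (M.toCoxeterSystem.simple_mul_simple_self t), M.toCoxeterSystem.simple_mul_simple_pow])
  have := congrArg φ h
  rw [map_lv, map_one] at this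
  simp only [hφ] at this
  rw [← lv_simple]; exact this

variable (hM : ∀ s t : S, s ≠ t → M s t = 0 ∨ 4 ≤ M s t)

include hM in
lemma count_ne_one [DecidableEq S] {l : List S} (h : M.toCoxeterSystem.wordProd l = 1) (s : S) :
    l.count s ≠ 1 := by
  intro hc
  have hmem : s ∈ l := by
    rw [← List.count_pos_iff]; omega
  obtain ⟨a, b, rfl⟩ := List.append_of_mem hmem
  have ha : s ∉ a := by
    rw [← List.count_eq_zero]; rw [List.count_append, List.count_cons_self] at hc; omega
  have hb : s ∉ b := by
    rw [← List.count_eq_zero]; rw [List.count_append, List.count_cons_self] at hc; omega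
  refine simple_ne_wordProd M hM s (a.reverse ++ b.reverse) (by simp [ha, hb]) ?_
  rw [CoxeterSystem.wordProd_append, CoxeterSystem.wordProd_cons] at h
  rw [CoxeterSystem.wordProd_append, CoxeterSystem.wordProd_reverse, CoxeterSystem.wordProd_reverse]
  generalize M.toCoxeterSystem.wordProd a = A at h
  generalize M.toCoxeterSystem.wordProd b = B at h
  calc M.toCoxeterSystem.simple s
      = A⁻¹ * (A * (M.toCoxeterSystem.simple s * B)) * B⁻¹ := by group
    _ = _ := by rw [h, mul_one]

lemma PP_app {W : Type*} [Group W] (cs : CoxeterSystem M W) (i : S) (x : W) (n : ℤ) :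
    PP cs (1 : ℤ) i (x, n) = (cs.simple i * x * cs.simple i,
      n + open Classical in if x = cs.simple i then 1 else 0) := rfl

lemma PP_inv_app {W : Type*} [Group W] (cs : CoxeterSystem M W) (i : S) (x : W) (n : ℤ) :
    (PP cs (1 : ℤ) i)⁻¹ (x, n) = (cs.simple i * x * cs.simple i,
      n - open Classical in if x = cs.simple i then 1 else 0) := rfl

include hM in
lemma lv_PP_fix (x : S) (w : List (S × Bool)) (hw : x ∉ w.map Prod.fst) (n : ℤ) :
    ∃ l : List S, x ∉ l ∧
      lv (PP M.toCoxeterSystem (1 : ℤ)) w (M.toCoxeterSystem.simple x, n) =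
      (M.toCoxeterSystem.wordProd l * M.toCoxeterSystem.simple x *
        (M.toCoxeterSystem.wordProd l)⁻¹, n) := by
  induction w with
  | nil => exact ⟨[], by simp, by simp [lv, -CoxeterMatrix.toCoxeterSystem_simple]⟩
  | cons y w ih =>
    simp only [List.map_cons, List.mem_cons, not_or] at hw
    obtain ⟨l, hl, e⟩ := ih hw.2
    refine ⟨y.1 :: l, by simp [hl, hw.1], ?_⟩
    rw [lv_cons, Equiv.Perm.mul_apply, e]
    have hne : M.toCoxeterSystem.wordProd l * M.toCoxeterSystem.simple x *
        (M.toCoxeterSystem.wordProd l)⁻¹ ≠ M.toCoxeterSystem.simple y.1 := by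
      intro h
      refine simple_ne_wordProd M hM x (l.reverse ++ y.1 :: l) (by simp [hl, hw.1]) ?_
      rw [CoxeterSystem.wordProd_append, CoxeterSystem.wordProd_cons,
        CoxeterSystem.wordProd_reverse, ← h]
      group
    have e1 : PP M.toCoxeterSystem (1:ℤ) y.1 (M.toCoxeterSystem.wordProd l *
        M.toCoxeterSystem.simple x * (M.toCoxeterSystem.wordProd l)⁻¹, n) =
        (M.toCoxeterSystem.wordProd (y.1 :: l) * M.toCoxeterSystem.simple x *
        (M.toCoxeterSystem.wordProd (y.1 :: l))⁻¹, n) := by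
      rw [PP_app, if_neg hne]
      simp only [CoxeterSystem.wordProd_cons, mul_inv_rev,
        CoxeterSystem.inv_simple, mul_assoc, add_zero]
    have e2 : (PP M.toCoxeterSystem (1:ℤ) y.1)⁻¹ (M.toCoxeterSystem.wordProd l *
        M.toCoxeterSystem.simple x * (M.toCoxeterSystem.wordProd l)⁻¹, n) =
        (M.toCoxeterSystem.wordProd (y.1 :: l) * M.toCoxeterSystem.simple x *
        (M.toCoxeterSystem.wordProd (y.1 :: l))⁻¹, n) := by
      rw [PP_inv_app, if_neg hne]
      simp only [CoxeterSystem.wordProd_cons, mul_inv_rev,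
        CoxeterSystem.inv_simple, mul_assoc, sub_zero]
    split_ifs
    · exact e1
    · exact e2

include hM in
lemma no_square (x : S) (e : Bool) (p q : List (S × Bool)) (hp : x ∉ p.map Prod.fst)
    (hq : x ∉ q.map Prod.fst) : lv (artinGen M) (p ++ (x, e) :: (x, e) :: q) ≠ 1 := by
  intro h
  obtain ⟨φ, hφ⟩ := exists_lift M (PP M.toCoxeterSystem (1 : ℤ)) (PP_braid _ _)
  have h1 := congrArg φ h
  rw [map_lv, map_one] at h1
  simp only [hφ] at h1
  rw [lv_append, lv_cons, lv_cons] at h1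
  obtain ⟨l, -, e1⟩ := lv_PP_fix M hM x (q ++ p) (by simp at hp hq ⊢; tauto) (if e then 2 else -2)
  rw [lv_append] at e1
  set P := lv (PP M.toCoxeterSystem (1:ℤ)) p
  set Q := lv (PP M.toCoxeterSystem (1:ℤ)) q
  set y := (if (x, e).2 then PP M.toCoxeterSystem (1:ℤ) (x, e).1 else
    (PP M.toCoxeterSystem (1:ℤ) (x, e).1)⁻¹) with hy
  have h2 : Q * P * (y * y) = 1 := by
    have : P * (y * y) = Q⁻¹ := by
      rw [eq_inv_iff_mul_eq_one, ← h1]; group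
    rw [mul_assoc, this, mul_inv_cancel]
  have h3 : (y * y) (M.toCoxeterSystem.simple x, 0) =
      (M.toCoxeterSystem.simple x, if e then 2 else -2) := by
    cases e
    · simp only [hy, Bool.false_eq_true, if_false, Equiv.Perm.mul_apply]
      simp only [PP_inv_app, CoxeterSystem.simple_mul_simple_self, one_mul, if_true]
      norm_num
    · simp only [hy, if_true, Equiv.Perm.mul_apply]
      simp only [PP_app, CoxeterSystem.simple_mul_simple_self, one_mul, if_true]
      norm_num
  have h4 := DFunLike.congr_fun h2 (M.toCoxeterSystem.simple x, 0)
  rw [Equiv.Perm.mul_apply, h3, e1] at h4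
  have h5 := congrArg Prod.snd h4
  cases e <;> simp at h5

/-- Words which are trivial in the free group. -/
inductive NC {X : Type*} : List (X × Bool) → Prop
  | nil : NC []
  | step (x : X) (e : Bool) (u v : List (X × Bool)) : NC u → NC v →
      NC ((x, e) :: (u ++ (x, !e) :: v))

lemma NC.insert {X : Type*} (x : X) (e : Bool) {w : List (X × Bool)} (h : NC w) :
    ∀ p q, w = p ++ q → NC (p ++ (x, e) :: (x, !e) :: q) := by
  induction h with
  | nil =>
    intro p q h
    have := List.append_eq_nil_iff.mp h.symm
    rw [this.1, this.2]
    exact NC.step x e [] [] .nil .nil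
  | step y d u v hu hv ihu ihv =>
    intro p q h
    cases p with
    | nil =>
      simp only [List.nil_append] at h ⊢
      rw [← h]
      exact NC.step x e [] _ .nil (.step y d u v hu hv)
    | cons z p =>
      simp only [List.cons_append, List.cons.injEq] at h
      obtain ⟨rfl, h⟩ := h
      rw [List.append_eq_append_iff] at h
      rcases h with ⟨a, h1, h2⟩ | ⟨a, h1, h2⟩
      · cases a with
        | nil =>
          simp only [List.append_nil, List.nil_append] at h1 h2
          have := NC.step y d _ v (ihu u [] (by simp)) hv
          rw [h1, ← h2]
          simpa using this
        | cons b a =>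
          simp only [List.cons_append, List.cons.injEq] at h2
          obtain ⟨rfl, h2⟩ := h2
          have := NC.step y d u _ hu (ihv a q h2)
          rw [h1]
          simpa using this
      · have := NC.step y d _ v (ihu p a h1) hv
        rw [h2]
        simpa using this

lemma NC.trivial {X G : Type*} [Group G] (f : X → G) {w : List (X × Bool)} (h : NC w) :
    lv f w = 1 := by
  induction h with
  | nil => simp [lv]
  | step y d u v hu hv ihu ihv =>
    rw [lv_cons, lv_append, lv_cons, ihu, ihv]
    cases d <;> simp

include hM in
theorem NC_of_trivial [DecidableEq S] (n : ℕ) : ∀ w : List (S × Bool), w.length ≤ n →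
    lv (artinGen M) w = 1 →
    (∀ x, (w.map Prod.fst).count x ≤ 2) → NC w := by
  induction n with
  | zero =>
    intro w hw _ _
    have : w = [] := List.length_eq_zero_iff.mp (by omega)
    rw [this]; exact .nil
  | succ n ih =>
    intro w hw h1 hc
    by_cases hnil : w = []
    · rw [hnil]; exact .nil
    have hb : HB M.toCoxeterSystem := fun s t hst => braid_ne M hM hst
    obtain ⟨p, x, q, e⟩ := adjacent M.toCoxeterSystem hb (w.map Prod.fst) (by simpa using hnil) hc
      (wordProd_of_lv M h1)
    obtain ⟨p', r, rfl, hp', hr⟩ := List.map_eq_append_iff.mp e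
    obtain ⟨a, r, rfl, ha, hr⟩ := List.map_eq_cons_iff.mp hr
    obtain ⟨b, q', rfl, hb', hq⟩ := List.map_eq_cons_iff.mp hr
    obtain ⟨a1, a2⟩ := a
    obtain ⟨b1, b2⟩ := b
    simp only at ha hb'
    subst a1; subst b1
    have hcx := hc x
    rw [e, List.count_append, List.count_cons_self, List.count_cons_self] at hcx
    have hxp : x ∉ p'.map Prod.fst := by rw [hp', ← List.count_eq_zero]; omega
    have hxq : x ∉ q'.map Prod.fst := by rw [hq, ← List.count_eq_zero]; omega
    by_cases hs : a2 = b2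
    · subst hs
      exact absurd h1 (no_square M hM x a2 p' q' hxp hxq)
    · have hb2 : b2 = !a2 := by cases a2 <;> cases b2 <;> simp_all
      subst hb2
      refine NC.insert x a2 (ih (p' ++ q') ?_ ?_ ?_) p' q' rfl
      · simp at hw ⊢; omega
      · rw [lv_append, lv_cons, lv_cons] at h1
        rw [lv_append, ← h1]
        cases a2 <;> simp
      · intro y
        refine le_trans (List.Sublist.count_le y ?_) (hc y)
        apply List.Sublist.map
        apply List.Sublist.append_left
        exact (List.sublist_cons_self _ _).trans (List.sublist_cons_self _ _)

end artin
end ArtinCLT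

open Filter Topology
namespace ArtinCLT

lemma NC.even_length {X : Type*} {w : List (X × Bool)} (h : NC w) : Even w.length := by
  induction h with
  | nil => simp
  | step y d u v hu hv ihu ihv =>
    obtain ⟨a, ha⟩ := ihu
    obtain ⟨b, hb⟩ := ihv
    exact ⟨a + b + 1, by simp; omega⟩

lemma NC_upper {X : Type*} [DecidableEq X] (F : Finset X) (n : ℕ) :
    ∃ U : Finset (List (X × Bool)), U.card ≤ catalan n * (2 * F.card) ^ n ∧
      ∀ w, NC w → w.length = 2 * n → (∀ x ∈ w, x.1 ∈ F) → w ∈ U := by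
  induction n using Nat.strong_induction_on with
  | _ n ih =>
  choose! U hU1 hU2 using ih
  cases n with
  | zero =>
    refine ⟨{[]}, by simp, fun w _ h _ => ?_⟩
    simpa using h
  | succ n =>
    refine ⟨(Finset.HasAntidiagonal.antidiagonal n).biUnion fun p =>
      ((F ×ˢ (Finset.univ : Finset Bool)) ×ˢ (U p.1 ×ˢ U p.2)).image
        (fun q => (q.1.1, q.1.2) :: (q.2.1 ++ (q.1.1, !q.1.2) :: q.2.2)), ?_, ?_⟩
    · refine Finset.card_biUnion_le.trans ?_
      rw [catalan_succ', Finset.sum_mul]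
      refine Finset.sum_le_sum fun p hp => ?_
      rw [Finset.HasAntidiagonal.mem_antidiagonal] at hp
      refine Finset.card_image_le.trans ?_
      rw [Finset.card_product, Finset.card_product, Finset.card_product, Finset.card_univ,
        Fintype.card_bool]
      calc F.card * 2 * ((U p.1).card * (U p.2).card)
          ≤ F.card * 2 * ((catalan p.1 * (2 * F.card) ^ p.1) * (catalan p.2 * (2 * F.card) ^ p.2)) := by
            gcongr
            · exact hU1 _ (by omega)
            · exact hU1 _ (by omega)
        _ = _ := by rw [← hp]; ring
    · intro w hw hl hF
      cases hw with
      | nil => simp at hl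
      | step x e u v hu hv =>
        obtain ⟨a, ha⟩ := hu.even_length
        obtain ⟨b, hb⟩ := hv.even_length
        simp at hl
        rw [Finset.mem_biUnion]
        refine ⟨(a, b), by simp; omega, ?_⟩
        rw [Finset.mem_image]
        refine ⟨((x, e), (u, v)), ?_, rfl⟩
        simp only [Finset.mem_product, Finset.mem_univ, and_true]
        refine ⟨hF (x, e) (by simp), hU2 a (by omega) u hu (by omega) ?_,
          hU2 b (by omega) v hv (by omega) ?_⟩
        · intro y hy; exact hF y (by simp [hy])
        · intro y hy; exact hF y (by simp [hy])

lemma split_inj {X : Type*} {x : X} {a b : Bool} : ∀ {u u' v v' : List (X × Bool)},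
    (∀ y ∈ u, y.1 ≠ x) → (∀ y ∈ u', y.1 ≠ x) → u ++ (x, a) :: v = u' ++ (x, b) :: v' →
    u = u' ∧ v = v' := by
  intro u
  induction u with
  | nil =>
    intro u' v v' _ h' h
    cases u' with
    | nil => simp at h; exact ⟨rfl, h.2⟩
    | cons z u' =>
      simp at h
      exact absurd (by rw [← h.1]) (h' z (by simp))
  | cons y u ih =>
    intro u' v v' h1 h' h
    cases u' with
    | nil =>
      simp at h
      exact absurd (by rw [h.1]) (h1 y (by simp))
    | cons z u' =>
      simp only [List.cons_append, List.cons.injEq] at h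
      obtain ⟨h2, h3⟩ := ih (fun w hw => h1 w (by simp [hw])) (fun w hw => h' w (by simp [hw])) h.2
      exact ⟨by rw [h.1, h2], h3⟩

lemma NC_lower {X : Type*} [DecidableEq X] (n : ℕ) : ∀ (F : Finset X),
    ∃ U : Finset (List (X × Bool)), catalan n * (2 * (F.card - n)) ^ n ≤ U.card ∧
      ∀ w ∈ U, NC w ∧ w.length = 2 * n ∧ (∀ x ∈ w, x.1 ∈ F) := by
  induction n using Nat.strong_induction_on with
  | _ n ih =>
  choose! U hU1 hU2 using ih
  cases n with
  | zero =>
    exact fun F => ⟨{[]}, by simp, by simp [NC.nil]⟩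
  | succ n =>
    intro F
    let I : Finset (Σ _ : ℕ × ℕ, Σ _ : X, Bool × (List (X × Bool) × List (X × Bool))) :=
      (Finset.HasAntidiagonal.antidiagonal n).sigma fun p => F.sigma fun x =>
        (Finset.univ : Finset Bool) ×ˢ (U p.1 (F.erase x) ×ˢ U p.2 F)
    let g : (Σ _ : ℕ × ℕ, Σ _ : X, Bool × (List (X × Bool) × List (X × Bool))) →
      List (X × Bool) := fun q =>
        (q.2.1, q.2.2.1) :: (q.2.2.2.1 ++ (q.2.1, !q.2.2.1) :: q.2.2.2.2)
    have hI : ∀ q ∈ I, q.1.1 + q.1.2 = n ∧ q.2.1 ∈ F ∧ q.2.2.2.1 ∈ U q.1.1 (F.erase q.2.1) ∧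
        q.2.2.2.2 ∈ U q.1.2 F := by
      intro q hq
      simpa [I] using hq
    refine ⟨I.image g, ?_, ?_⟩
    · rw [Finset.card_image_of_injOn, Finset.card_sigma, catalan_succ', Finset.sum_mul]
      · refine Finset.sum_le_sum fun p hp => ?_
        rw [Finset.HasAntidiagonal.mem_antidiagonal] at hp
        rw [Finset.card_sigma]
        have : ∀ x ∈ F, 2 * ((catalan p.1 * (2 * (F.card - (n+1))) ^ p.1) *
            (catalan p.2 * (2 * (F.card - (n+1))) ^ p.2)) ≤
            ((Finset.univ : Finset Bool) ×ˢ (U p.1 (F.erase x) ×ˢ U p.2 F)).card := by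
          intro x hx
          rw [Finset.card_product, Finset.card_product, Finset.card_univ, Fintype.card_bool]
          gcongr
          · refine le_trans ?_ (hU1 p.1 (by omega) _)
            rw [Finset.card_erase_of_mem hx]
            gcongr 2
            omega
          · refine le_trans ?_ (hU1 p.2 (by omega) _)
            gcongr 2
            omega
        refine le_trans ?_ (Finset.sum_le_sum this)
        rw [Finset.sum_const, smul_eq_mul]
        calc catalan p.1 * catalan p.2 * (2 * (F.card - (n+1))) ^ (n+1)
            = (F.card - (n+1)) * (2 * ((catalan p.1 * (2 * (F.card - (n+1))) ^ p.1) *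
            (catalan p.2 * (2 * (F.card - (n+1))) ^ p.2))) := by
              generalize F.card - (n+1) = m
              rw [← hp]; ring
          _ ≤ _ := by gcongr; omega
      · rintro ⟨⟨i, j⟩, x, e, u, v⟩ hq ⟨⟨i', j'⟩, x', e', u', v'⟩ hq' h
        obtain ⟨h1, h2, h3, h4⟩ := hI _ hq
        obtain ⟨h1', h2', h3', h4'⟩ := hI _ hq'
        simp only at h1 h2 h3 h4 h1' h2' h3' h4'
        simp only [g, List.cons.injEq, Prod.mk.injEq] at h
        obtain ⟨⟨rfl, rfl⟩, h⟩ := h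
        have hu := hU2 i (by omega) _ _ h3
        have hu' := hU2 i' (by omega) _ _ h3'
        obtain ⟨rfl, rfl⟩ := split_inj (fun y hy => (Finset.mem_erase.mp (hu.2.2 y hy)).1)
          (fun y hy => (Finset.mem_erase.mp (hu'.2.2 y hy)).1) h
        have : i = i' := by omega
        subst this
        have : j = j' := by omega
        subst this
        rfl
    · intro w hw
      obtain ⟨⟨⟨i, j⟩, x, e, u, v⟩, hq, rfl⟩ := Finset.mem_image.mp hw
      obtain ⟨h1, h2, h3, h4⟩ := hI _ hq
      simp only at h1 h2 h3 h4
      have hu := hU2 i (by omega) _ _ h3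
      have hv := hU2 j (by omega) _ _ h4
      refine ⟨NC.step x e u v hu.1 hv.1, ?_, ?_⟩
      · simp [g]; omega
      · intro y hy
        simp only [g, List.mem_cons, List.mem_append] at hy
        rcases hy with rfl | hy | rfl | hy
        · exact h2
        · exact Finset.mem_of_mem_erase (hu.2.2 y hy)
        · exact h2
        · exact hv.2.2 y hy

/-- Words with few letters. -/
def few (k N : ℕ) : Finset (Fin k → Fin N × Bool) :=
  Finset.univ.filter fun w => 2 * (Finset.univ.image fun j => (w j).1).card < k

lemma few_card (k N d : ℕ) (hk : k ≤ 2 * d + 2) :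
    (few k N).card ≤ d ^ k * N ^ d * 2 ^ k := by
  have : few k N ⊆ (Finset.univ : Finset ((Fin k → Fin d) × (Fin d → Fin N) × (Fin k → Bool))).image
      (fun q j => (q.2.1 (q.1 j), q.2.2 j)) := by
    intro w hw
    simp only [few, Finset.mem_filter, Finset.mem_univ, true_and] at hw
    rw [Finset.mem_image]
    set D := Finset.univ.image fun j => (w j).1 with hD
    have hmem : ∀ j, (w j).1 ∈ D := fun j => by simp [hD]
    obtain ⟨e⟩ : Nonempty (D ↪ Fin d) := by
      apply Function.Embedding.nonempty_of_card_le
      simp; omega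
    refine ⟨(fun j => e ⟨(w j).1, hmem j⟩,
      Function.extend e Subtype.val (fun _ => (w ⟨0, by omega⟩).1), fun j => (w j).2), by simp, ?_⟩
    funext j
    simp only
    rw [e.injective.extend_apply]
  refine (Finset.card_le_card this).trans (Finset.card_image_le.trans ?_)
  simp [Finset.card_univ]
  exact le_of_eq (by ring)

lemma few_sq (k : ℕ) : ∃ C : ℕ, ∀ N, (few k N).card ^ 2 * N ≤ C * N ^ k := by
  rcases Nat.eq_zero_or_pos k with rfl | hk
  · exact ⟨0, fun N => by simp [few]⟩
  refine ⟨(((k - 1) / 2) ^ k * 2 ^ k) ^ 2, fun N => ?_⟩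
  rcases Nat.eq_zero_or_pos N with rfl | hN
  · simp
  have := few_card k N ((k - 1) / 2) (by omega)
  calc (few k N).card ^ 2 * N ≤ (((k - 1) / 2) ^ k * N ^ ((k - 1) / 2) * 2 ^ k) ^ 2 * N := by gcongr
    _ = (((k - 1) / 2) ^ k * 2 ^ k) ^ 2 * N ^ (2 * ((k - 1) / 2) + 1) := by ring
    _ ≤ _ := by
      gcongr 1
      · exact Nat.pow_le_pow_right hN (by omega)

section main
variable {S : Type*} (M : CoxeterMatrix S) (s : ℕ → S)

/-- The list associated to a tuple. -/
def toL {k N : ℕ} (w : Fin k → Fin N × Bool) : List (S × Bool) :=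
  List.ofFn fun j => (s ((w j).1 : ℕ), (w j).2)

variable (hs : Function.Injective s)

include hs in
lemma toL_inj {k N : ℕ} : Function.Injective (toL s (k := k) (N := N)) := by
  intro w w' h
  have := List.ofFn_injective h
  funext j
  have h := congrFun this j
  simp only [Prod.mk.injEq] at h
  exact Prod.ext (Fin.ext (hs h.1)) h.2

lemma lv_toL {k N : ℕ} (w : Fin k → Fin N × Bool) : lv (artinGen M) (toL s w) =
    (List.ofFn fun j => if (w j).2 then artinGen M (s (((w j).1 : ℕ)))
              else (artinGen M (s (((w j).1 : ℕ))))⁻¹).prod := by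
  unfold lv toL
  rw [List.map_ofFn]
  rfl

variable (hM : ∀ s t : S, s ≠ t → M s t = 0 ∨ 4 ≤ M s t)

include hM hs in
lemma few_or_NC {k N : ℕ} (w : Fin k → Fin N × Bool) (h : lv (artinGen M) (toL s w) = 1) :
    w ∈ few k N ∨ NC (toL s w) := by
  classical
  by_cases hc : ∀ x, ((toL s w).map Prod.fst).count x ≤ 2
  · exact Or.inr (NC_of_trivial M hM _ _ le_rfl h hc)
  · left
    push Not at hc
    obtain ⟨x, hx⟩ := hc
    have h1 := fun y => count_ne_one M hM (wordProd_of_lv M h) y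
    simp only [few, Finset.mem_filter, Finset.mem_univ, true_and]
    have e : ((toL s w).map Prod.fst).toFinset =
        (Finset.univ.image fun j => (w j).1).image (fun i : Fin N => s i) := by
      ext y
      simp [toL, List.mem_ofFn]
    have hlen : ((toL s w).map Prod.fst).length = k := by simp [toL]
    have hcard : (Finset.univ.image fun j => (w j).1).card =
        ((toL s w).map Prod.fst).toFinset.card := by
      rw [e]
      exact (Finset.card_image_of_injective _ (fun a b hab => Fin.ext (hs hab))).symm
    rw [hcard]
    have hsum := List.sum_toFinset_count_eq_length ((toL s w).map Prod.fst)
    rw [hlen] at hsum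
    refine lt_of_lt_of_eq ?_ hsum
    rw [mul_comm, ← smul_eq_mul, ← Finset.sum_const]
    apply Finset.sum_lt_sum
    · intro y hy
      have := h1 y
      have h2 : 0 < ((toL s w).map Prod.fst).count y := by
        rw [List.count_pos_iff]; exact List.mem_toFinset.mp hy
      omega
    · refine ⟨x, ?_, hx⟩
      rw [List.mem_toFinset, ← List.count_pos_iff]; omega

/-- Trivial tuples. -/
noncomputable def triv (k N : ℕ) : Finset (Fin k → Fin N × Bool) :=
  open Classical in Finset.univ.filter fun w => lv (artinGen M) (toL s w) = 1

include hM hs in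
lemma triv_le (k N : ℕ) : (triv M s k N).card ≤ (few k N).card +
    if Even k then catalan (k / 2) * (2 * N) ^ (k / 2) else 0 := by
  classical
  obtain ⟨U, hU1, hU2⟩ := NC_upper (Finset.univ.image (fun i : Fin N => s i)) (k / 2)
  have hF : (Finset.univ.image (fun i : Fin N => s i)).card = N := by
    rw [Finset.card_image_of_injective _ (fun a b hab => Fin.ext (hs hab))]; simp
  rw [hF] at hU1
  have hlen : ∀ w : Fin k → Fin N × Bool, (toL s w).length = k := fun w => by simp [toL]
  split_ifs with hk
  · have : triv M s k N ⊆ few k N ∪ Finset.univ.filter (fun w => toL s w ∈ U) := by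
      intro w hw
      simp only [triv, Finset.mem_filter, Finset.mem_univ, true_and] at hw
      rw [Finset.mem_union]
      refine (few_or_NC M s hs hM w hw).imp_right fun h => ?_
      simp only [Finset.mem_filter, Finset.mem_univ, true_and]
      refine hU2 _ h ?_ ?_
      · rw [hlen]; obtain ⟨a, rfl⟩ := hk; omega
      · intro x hx
        simp only [toL, List.mem_ofFn] at hx
        obtain ⟨j, rfl⟩ := hx
        simp
    refine (Finset.card_le_card this).trans ((Finset.card_union_le _ _).trans ?_)
    gcongr
    refine le_trans ?_ hU1
    refine Finset.card_le_card_of_injOn (toL s) ?_ (toL_inj s hs).injOn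
    intro w hw
    simpa using hw
  · rw [add_zero]
    apply Finset.card_le_card
    intro w hw
    simp only [triv, Finset.mem_filter, Finset.mem_univ, true_and] at hw
    refine (few_or_NC M s hs hM w hw).resolve_right fun h => hk ?_
    have := h.even_length
    rwa [hlen] at this

include hs in
lemma le_triv (n N : ℕ) : catalan n * (2 * (N - n)) ^ n ≤ (triv M s (2 * n) N).card := by
  classical
  obtain ⟨U, hU1, hU2⟩ := NC_lower n (Finset.univ.image (fun i : Fin N => s i))
  have hF : (Finset.univ.image (fun i : Fin N => s i)).card = N := by
    rw [Finset.card_image_of_injective _ (fun a b hab => Fin.ext (hs hab))]; simp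
  rw [hF] at hU1
  refine hU1.trans ?_
  have : U ⊆ (triv M s (2 * n) N).image (toL s) := by
    intro l hl
    obtain ⟨h1, h2, h3⟩ := hU2 l hl
    rw [Finset.mem_image]
    have h4 : ∀ j : Fin (2 * n), ∃ i : Fin N, s i = (l.get (Fin.cast h2.symm j)).1 := by
      intro j
      simpa using h3 _ (List.get_mem l (Fin.cast h2.symm j))
    choose i hi using h4
    have e : toL s (fun j => (i j, (l.get (Fin.cast h2.symm j)).2)) = l := by
      apply List.ext_get
      · simp [toL, h2]
      · intro m hm hm'
        have := hi ⟨m, by omega⟩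
        simp only [toL, List.get_ofFn]
        apply Prod.ext
        · exact this
        · rfl
    refine ⟨_, ?_, e⟩
    simp only [triv, Finset.mem_filter, Finset.mem_univ, true_and]
    rw [e]
    exact h1.trivial _
  exact (Finset.card_le_card this).trans Finset.card_image_le

lemma few_tendsto (k : ℕ) :
    Tendsto (fun N : ℕ => ((few k N).card : ℝ) / (Real.sqrt (2 * N)) ^ k) atTop (𝓝 0) := by
  obtain ⟨C, hC⟩ := few_sq k
  have h0 : Tendsto (fun N : ℕ => Real.sqrt (C / (N : ℝ))) atTop (𝓝 0) := by
    have := (tendsto_const_div_atTop_nhds_zero_nat (C : ℝ)).sqrt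
    simpa using this
  refine squeeze_zero' (Eventually.of_forall fun N => by positivity) ?_ h0
  filter_upwards [eventually_gt_atTop 0] with N hN
  have hN' : (0 : ℝ) < N := by exact_mod_cast hN
  apply Real.le_sqrt_of_sq_le
  rw [div_pow, ← pow_mul, mul_comm k 2, pow_mul, Real.sq_sqrt (by positivity), div_le_div_iff₀ (by positivity) hN']
  have : ((few k N).card : ℝ) ^ 2 * N ≤ C * N ^ k := by exact_mod_cast hC N
  refine this.trans ?_
  gcongr
  linarith

end main
end ArtinCLT

/-- **Central limit theorem for Artin groups of extra-large type.**
Let `M` be a Coxeter matrix of extra-large type (`M s t = 0` or `M s t ≥ 4` for `s ≠ t`,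
`0` encoding `∞`) on a countably infinite type `S`, with Artin group `A` and generators `a`,
and fix an injective enumeration `s : ℕ → S`.  Then for every `k`, the normalized moment
`(2N)^(-k/2) · #{((i₁,ε₁), …, (i_k,ε_k)) : a_{s i₁}^{ε₁} ⋯ a_{s i_k}^{ε_k} = 1}` (letters
ranging over `{0, …, N-1}`, signs over `{±1}`) converges, as `N → ∞`, to `0` if `k` is odd
and to the Catalan number `C_n` if `k = 2n` is even. -/
theorem artin_clt {S : Type*} [Countable S] [Infinite S]
    (M : CoxeterMatrix S) (hM : ∀ s t : S, s ≠ t → M s t = 0 ∨ 4 ≤ M s t)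
    (s : ℕ → S) (hs : Function.Injective s) (k : ℕ) :
    Tendsto
      (fun N : ℕ =>
        (Nat.card {w : Fin k → Fin N × Bool //
            (List.ofFn fun j =>
              if (w j).2 then artinGen M (s (((w j).1 : ℕ)))
              else (artinGen M (s (((w j).1 : ℕ))))⁻¹).prod = 1} : ℝ)
          / (Real.sqrt (2 * N)) ^ k)
      atTop
      (𝓝 (if Even k then (catalan (k / 2) : ℝ) else 0)) := by
  have hcard : ∀ N : ℕ, Nat.card {w : Fin k → Fin N × Bool //
            (List.ofFn fun j =>
              if (w j).2 then artinGen M (s (((w j).1 : ℕ)))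
              else (artinGen M (s (((w j).1 : ℕ))))⁻¹).prod = 1} =
      (ArtinCLT.triv M s k N).card := by
    intro N
    classical
    simp only [← ArtinCLT.lv_toL]
    rw [Nat.card_eq_fintype_card, Fintype.card_subtype]
    unfold ArtinCLT.triv
    congr
  simp only [hcard]
  have hfew := ArtinCLT.few_tendsto k
  have hle := ArtinCLT.triv_le M s hs hM k
  by_cases hk : Even k
  · simp only [if_pos hk] at hle ⊢
    obtain ⟨n, rfl⟩ : ∃ n, k = 2 * n := hk.two_dvd
    rw [Nat.mul_div_cancel_left n (by norm_num)] at hle ⊢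
    have hsq : ∀ N : ℕ, Real.sqrt (2 * N) ^ (2 * n) = (2 * N : ℝ) ^ n := fun N => by
      rw [pow_mul, Real.sq_sqrt (by positivity)]
    have hlow : Tendsto (fun N : ℕ => (catalan n : ℝ) * (1 - n / (N : ℝ)) ^ n) atTop
        (𝓝 (catalan n : ℝ)) := by
      have h1 := tendsto_const_div_atTop_nhds_zero_nat (n : ℝ)
      have := ((h1.const_sub 1).pow n).const_mul (catalan n : ℝ)
      simpa using this
    have hup := hfew.add_const (catalan n : ℝ)
    rw [zero_add] at hup
    refine tendsto_of_tendsto_of_tendsto_of_le_of_le' hlow hup ?_ ?_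
    · filter_upwards [eventually_gt_atTop n] with N hN
      have hN' : (0 : ℝ) < N := by exact_mod_cast (by omega : 0 < N)
      rw [hsq, le_div_iff₀ (by positivity)]
      have := ArtinCLT.le_triv M s hs n N
      have h2 : (catalan n : ℝ) * (2 * (N - n)) ^ n ≤ ((ArtinCLT.triv M s (2 * n) N).card : ℝ) := by
        rw [← Nat.cast_sub hN.le]; exact_mod_cast this
      refine le_trans (le_of_eq ?_) h2
      rw [mul_assoc, ← mul_pow]
      congr 2
      field_simp
    · filter_upwards [eventually_gt_atTop 0] with N hN
      have hN' : (0 : ℝ) < N := by exact_mod_cast hN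
      have h2 : ((ArtinCLT.triv M s (2 * n) N).card : ℝ) ≤
          (ArtinCLT.few (2 * n) N).card + catalan n * (2 * N) ^ n := by exact_mod_cast hle N
      rw [hsq, div_add' _ _ _ (by positivity)]
      gcongr
  · simp only [if_neg hk, add_zero] at hle ⊢
    refine squeeze_zero (fun N => by positivity) (fun N => ?_) hfew
    exact div_le_div_of_nonneg_right (by exact_mod_cast hle N) (by positivity)
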